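/- Let G be a connected vertex-transitive non-bipartite triangle-free simple graph of degree 5 and even order that is not 4-factor-critical, and suppose λ₅(G) = λ₆(G) = 13. Then every λ₆-atom S of G satisfies |S| ≥ 11. -/

import Mathlib

open SimpleGraph

section Defs

variable {V : Type*}

/-- A simple graph is vertex-transitive if any vertex can be mapped to any other
by a graph automorphism. -/
def VertexTransitive (G : SimpleGraph V) : Prop :=
  ∀ x y : V, ∃ φ : G ≃g G, φ x = y

/-- A graph is `p`-factor-critical if the removal of any set of `p` vertices
results in a graph with a perfect matching. -/
def PFactorCritical (G : SimpleGraph V) (p : ℕ) : Prop :=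
  ∀ X : Set V, X.ncard = p → ∃ M : (G.induce Xᶜ).Subgraph, M.IsPerfectMatching

/-- A graph is factor-critical if the removal of any single vertex results in a
graph with a perfect matching. -/
def IsFactorCritical {W : Type*} (H : SimpleGraph W) : Prop :=
  ∀ v : W, ∃ M : (H.induce ({v}ᶜ : Set W)).Subgraph, M.IsPerfectMatching

/-- `∇(X)`: the set of edges of `G` with exactly one end in `X`. -/
def edgeBoundary (G : SimpleGraph V) (X : Set V) : Set (Sym2 V) :=
  {e | e ∈ G.edgeSet ∧ ∃ x ∈ X, ∃ y ∈ Xᶜ, e = s(x, y)}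

/-- The set of edges of `G` with both ends in `X`. -/
def edgesWithin (G : SimpleGraph V) (X : Set V) : Set (Sym2 V) :=
  {e | e ∈ G.edgeSet ∧ ∀ v ∈ e, v ∈ X}

/-- The set of edges of `G` with one end in `A` and the other end in `S \ A`
(i.e. the edge boundary of `A` inside the induced subgraph `G[S]` when `A ⊆ S`). -/
def inducedEdgeBoundary (G : SimpleGraph V) (S A : Set V) : Set (Sym2 V) :=
  {e | e ∈ G.edgeSet ∧ ∃ x ∈ A, ∃ y ∈ S \ A, e = s(x, y)}

/-- `F` is an `s`-restricted edge-cut of `G` if deleting `F` disconnects `G` and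
every component of `G − F` has at least `s` vertices. -/
def IsRestrictedEdgeCut (G : SimpleGraph V) (s : ℕ) (F : Set (Sym2 V)) : Prop :=
  F ⊆ G.edgeSet ∧ ¬ (G.deleteEdges F).Connected ∧
    ∀ c : (G.deleteEdges F).ConnectedComponent, s ≤ c.supp.ncard

/-- `λ_s(G)`: the minimum cardinality of an `s`-restricted edge-cut of `G`. -/
noncomputable def lambdaS (G : SimpleGraph V) (s : ℕ) : ℕ :=
  sInf (Set.ncard '' {F | IsRestrictedEdgeCut G s F})

/-- A `λ_s`-fragment: a vertex set whose edge boundary is an `s`-restricted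
edge-cut of minimum cardinality `λ_s(G)`. -/
def IsLambdaFragment (G : SimpleGraph V) (s : ℕ) (X : Set V) : Prop :=
  IsRestrictedEdgeCut G s (edgeBoundary G X) ∧ (edgeBoundary G X).ncard = lambdaS G s

/-- A `λ_s`-atom: a `λ_s`-fragment of minimum cardinality. -/
def IsLambdaAtom (G : SimpleGraph V) (s : ℕ) (X : Set V) : Prop :=
  IsLambdaFragment G s X ∧ ∀ Y : Set V, IsLambdaFragment G s Y → X.ncard ≤ Y.ncard

/-- The odd girth of `G`: the length of a shortest odd cycle of `G`. -/
noncomputable def oddGirth (G : SimpleGraph V) : ℕ :=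
  sInf {n | Odd n ∧ ∃ (v : V) (c : G.Walk v v), c.IsCycle ∧ c.length = n}

/-- `X` is an independent set of `G`. -/
def IsIndependentSet (G : SimpleGraph V) (X : Set V) : Prop :=
  ∀ x ∈ X, ∀ y ∈ X, ¬ G.Adj x y

/-- The independence number `α(G)`. -/
noncomputable def indepNum (G : SimpleGraph V) : ℕ :=
  sSup {n | ∃ X : Set V, IsIndependentSet G X ∧ X.ncard = n}

/-- The number of trivial (single-vertex) components of `G − X`. -/
noncomputable def trivialComponentCount (G : SimpleGraph V) (X : Set V) : ℕ :=
  {c : (G.induce Xᶜ).ConnectedComponent | c.supp.ncard = 1}.ncard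

/-- The number of odd components of `G − X`. -/
noncomputable def oddComponentCount (G : SimpleGraph V) (X : Set V) : ℕ :=
  {c : (G.induce Xᶜ).ConnectedComponent | Odd c.supp.ncard}.ncard

/-- The number of nontrivial components of `G − X`. -/
noncomputable def nontrivialComponentCount (G : SimpleGraph V) (X : Set V) : ℕ :=
  {c : (G.induce Xᶜ).ConnectedComponent | 2 ≤ c.supp.ncard}.ncard

/-- An imprimitive block of `G`: a proper non-empty vertex set that every
automorphism either fixes setwise or maps to a disjoint set. -/
def IsImprimitiveBlock (G : SimpleGraph V) (X : Set V) : Prop :=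
  X.Nonempty ∧ X ≠ Set.univ ∧ ∀ φ : G ≃g G, (⇑φ) '' X = X ∨ ((⇑φ) '' X) ∩ X = ∅

/-- A connected graph is `q`-extendable if it has a perfect matching and every
matching of size `q` is contained in a perfect matching. -/
def Extendable (G : SimpleGraph V) (q : ℕ) : Prop :=
  (∃ M : G.Subgraph, M.IsPerfectMatching) ∧
    ∀ M : G.Subgraph, M.IsMatching → M.edgeSet.ncard = q →
      ∃ P : G.Subgraph, P.IsPerfectMatching ∧ M ≤ P

end Defs

/-!
Write `d(X)` for the number of edges leaving `X`. Mantel's theorem makes `d` large on sets with at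
most five vertices, so that the hypotheses on `λ₅` and `λ₆` become `13 ≤ d(X)` whenever `X` and
its complement have at least five vertices, and every `X` with `d(X) = 13` such that `X` and its
complement have at least six vertices is a `λ₆`-fragment.

Let `S` be a `λ₆`-atom. Every vertex of `S` has at least three neighbours in `S`, since removing
it does not decrease `d` below 13. As `5|S| - 13` is twice a number of edges, `|S|` is odd, and
triangle-freeness excludes `|S| = 7`. Suppose that `|S| = 9`, and let `F` be the family of all
9-sets `X` with `d(X) = 13`. By submodularity of `d` and minimality of `S`, two distinct members
of `F` share at most five vertices, and then triangle-freeness bounds the sum of the two inner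
degrees of a common vertex by 8. No vertex has inner degree 5, since an automorphism moving it to
a vertex of inner degree 4 would violate this bound. Hence every member of `F` has five vertices
of inner degree 4 and four of inner degree 3. At least four edges join vertices of inner degree 4,
and no edge arises in this way from two members, whence `8|F| ≤ 5n`, where `n` is the order of the
graph. On the other hand, transitivity of the automorphism group yields `n ∣ 9|F|` and `n ∣ 5|F|`,
hence `n ∣ |F|`, and `F = ∅`.
-/

open Finset

section Degrees

variable {V : Type*} (G : SimpleGraph V) [DecidableRel G.Adj]

/-- The number of neighbours of the vertex `v`, which need not lie in `X`, inside the vertex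
set `X`. -/
def degreeIn (X : Finset V) (v : V) : ℕ := #{u ∈ X | G.Adj v u}

/-- The vertices of `X` that have exactly `j` neighbours in `X`. -/
def verticesOfDegreeIn (X : Finset V) (j : ℕ) : Finset V := {v ∈ X | degreeIn G X v = j}

variable {G}

lemma degreeIn_le_card (X : Finset V) (v : V) : degreeIn G X v ≤ #X :=
  card_filter_le _ _

lemma card_interedges_eq_sum_degreeIn (X Y : Finset V) :
    #(G.interedges X Y) = ∑ v ∈ X, degreeIn G Y v := by
  simp only [interedges_def, card_filter, sum_product, degreeIn]

lemma card_interedges_comm (X Y : Finset V) : #(G.interedges X Y) = #(G.interedges Y X) :=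
  have : Std.Symm G.Adj := ⟨fun _ _ ↦ Adj.symm⟩
  Rel.card_interedges_comm X Y

lemma degreeIn_union_add_degreeIn_inter [DecidableEq V] (X Y : Finset V) (v : V) :
    degreeIn G (X ∪ Y) v + degreeIn G (X ∩ Y) v = degreeIn G X v + degreeIn G Y v := by
  rw [degreeIn, degreeIn, filter_union, filter_inter_distrib, card_union_add_card_inter]
  rfl

lemma card_interedges_union_right [DecidableEq V] (X : Finset V) {Y Z : Finset V}
    (h : Disjoint Y Z) :
    #(G.interedges X (Y ∪ Z)) = #(G.interedges X Y) + #(G.interedges X Z) := by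
  simp only [card_interedges_eq_sum_degreeIn, ← sum_add_distrib]
  refine sum_congr rfl fun v _ ↦ ?_
  rw [← degreeIn_union_add_degreeIn_inter, disjoint_iff_inter_eq_empty.mp h]
  simp [degreeIn]

lemma card_interedges_union_left [DecidableEq V] {X Y : Finset V} (h : Disjoint X Y)
    (Z : Finset V) :
    #(G.interedges (X ∪ Y) Z) = #(G.interedges X Z) + #(G.interedges Y Z) := by
  simp only [card_interedges_eq_sum_degreeIn, sum_union h]

lemma degreeIn_erase_self [DecidableEq V] (X : Finset V) (v : V) :
    degreeIn G (X.erase v) v = degreeIn G X v := by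
  rw [degreeIn, filter_erase, erase_eq_of_notMem (by simp)]
  rfl

lemma degreeIn_lt_card {X : Finset V} {v : V} (hv : v ∈ X) : degreeIn G X v < #X := by
  classical
  rw [← degreeIn_erase_self]
  exact (degreeIn_le_card _ v).trans_lt (card_erase_lt_of_mem hv)

lemma degreeIn_univ [Fintype V] (v : V) : degreeIn G univ v = G.degree v := by
  rw [degreeIn, ← neighborFinset_eq_filter, card_neighborFinset_eq_degree]

lemma degreeIn_le_degree [Fintype V] (X : Finset V) (v : V) : degreeIn G X v ≤ G.degree v := by
  rw [← degreeIn_univ]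
  exact card_le_card (filter_subset_filter _ (subset_univ X))

lemma degreeIn_add_degreeIn_compl [Fintype V] [DecidableEq V] (X : Finset V) (v : V) :
    degreeIn G X v + degreeIn G Xᶜ v = G.degree v := by
  rw [← degreeIn_union_add_degreeIn_inter, union_compl, inter_compl, degreeIn_univ]
  simp [degreeIn]

lemma degreeIn_add_degreeIn_le [Fintype V] [DecidableEq V] (X Y : Finset V) (v : V) :
    degreeIn G X v + degreeIn G Y v ≤ G.degree v + degreeIn G (X ∩ Y) v := by
  rw [← degreeIn_union_add_degreeIn_inter]
  exact Nat.add_le_add_right (degreeIn_le_degree _ v) _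

lemma degreeIn_map {W : Type*} {H : SimpleGraph W} [DecidableRel H.Adj] (φ : G ≃g H)
    (X : Finset V) (v : V) : degreeIn H (X.map φ.toEquiv.toEmbedding) (φ v) = degreeIn G X v := by
  rw [degreeIn, filter_map, card_map]
  exact congrArg card (filter_congr fun u _ ↦ φ.map_adj_iff)

lemma verticesOfDegreeIn_map (φ : G ≃g G) (X : Finset V) (j : ℕ) :
    verticesOfDegreeIn G (X.map φ.toEquiv.toEmbedding) j =
      (verticesOfDegreeIn G X j).map φ.toEquiv.toEmbedding := by
  rw [verticesOfDegreeIn, filter_map, verticesOfDegreeIn]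
  congr 1
  exact filter_congr fun v _ ↦ by rw [← degreeIn_map φ X v]; rfl

lemma card_interedges_map {W : Type*} {H : SimpleGraph W} [DecidableRel H.Adj] (φ : G ≃g H)
    (X Y : Finset V) :
    #(H.interedges (X.map φ.toEquiv.toEmbedding) (Y.map φ.toEquiv.toEmbedding)) =
      #(G.interedges X Y) := by
  simp only [card_interedges_eq_sum_degreeIn, sum_map]
  exact sum_congr rfl fun v _ ↦ degreeIn_map φ Y v

lemma two_mul_card_edgeFinset_induce (X : Finset V) :
    2 * #(G.induce (X : Set V)).edgeFinset = #(G.interedges X X) := by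
  rw [← sum_degrees_eq_twice_card_edges, card_interedges_eq_sum_degreeIn,
    ← sum_coe_sort X (degreeIn G X)]
  refine sum_congr rfl fun v _ ↦ ?_
  rw [← card_neighborFinset_eq_degree, neighborFinset_eq_filter, degreeIn]
  refine card_nbij Subtype.val (fun u hu ↦ ?_) Subtype.val_injective.injOn fun u hu ↦ ?_
  · simpa [and_comm] using hu
  · simpa [and_comm] using hu

lemma even_card_interedges_self (X : Finset V) : Even #(G.interedges X X) :=
  two_mul_card_edgeFinset_induce (G := G) X ▸ even_two_mul _

lemma exists_even_degreeIn_of_odd_card {X : Finset V} (hX : Odd #X) :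
    ∃ v ∈ X, Even (degreeIn G X v) := by
  by_contra! hodd
  simp only [Nat.not_even_iff_odd] at hodd
  have hsum : Odd (∑ v ∈ X, degreeIn G X v) := by
    rwa [odd_sum_iff_odd_card_odd, filter_true_of_mem hodd]
  rw [← card_interedges_eq_sum_degreeIn] at hsum
  exact Nat.not_even_iff_odd.mpr hsum (even_card_interedges_self X)

end Degrees

section TriangleFree

variable {V : Type*} {G : SimpleGraph V} [DecidableRel G.Adj]

/-- Mantel's theorem for the subgraph induced on `X`, counting every edge twice. -/
lemma two_mul_card_interedges_self_le (htri : G.CliqueFree 3) (X : Finset V) :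
    2 * #(G.interedges X X) ≤ #X ^ 2 := by
  have hfree := htri.comap (Embedding.induce (X : Set V)).isContained
  have hturan : #(G.induce (X : Set V)).edgeFinset ≤
      (#X ^ 2 - (#X % 2) ^ 2) * (2 - 1) / (2 * 2) + (#X % 2).choose 2 := by
    convert hfree.card_edgeFinset_le <;> simp
  have hmod : (#X % 2).choose 2 = 0 := Nat.choose_eq_zero_of_lt (Nat.mod_lt _ two_pos)
  grw [hmod, Nat.sub_le] at hturan
  rw [← two_mul_card_edgeFinset_induce]
  lia

lemma degreeIn_add_degreeIn_le_card (htri : G.CliqueFree 3) (X : Finset V) {u v : V}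
    (huv : G.Adj u v) : degreeIn G X u + degreeIn G X v ≤ #X := by
  classical
  rw [degreeIn, degreeIn, ← card_union_of_disjoint]
  · exact card_le_card (union_subset (filter_subset _ _) (filter_subset _ _))
  · rw [disjoint_filter]
    intro w _ huw hvw
    exact htri {u, v, w} (is3Clique_triple_iff.mpr ⟨huv, huw, hvw⟩)

/-- The neighbours of a vertex that dominates `X` have no further neighbours in `X`. -/
lemma card_interedges_self_add_two_le_of_dominating (htri : G.CliqueFree 3) {X : Finset V}
    {v : V} (hv : v ∈ X) (hdom : degreeIn G X v + 1 = #X) :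
    #(G.interedges X X) + 2 ≤ 2 * #X := by
  classical
  have hcard := card_erase_add_one hv
  have hneighbors : ({u ∈ X.erase v | G.Adj v u} : Finset V) = X.erase v := by
    refine eq_of_subset_of_card_le (filter_subset _ _) ?_
    have := degreeIn_erase_self (G := G) X v
    rw [degreeIn] at this
    lia
  have hle : ∑ u ∈ X.erase v, degreeIn G X u ≤ #(X.erase v) * 1 := by
    refine sum_le_card_nsmul _ _ _ fun u hu ↦ ?_
    have := degreeIn_add_degreeIn_le_card htri X (filter_eq_self.mp hneighbors u hu)
    lia
  rw [card_interedges_eq_sum_degreeIn, ← add_sum_erase X _ hv]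
  lia

lemma two_mul_mul_degreeIn_le_card_interedges_self (htri : G.CliqueFree 3) {X : Finset V} {δ : ℕ}
    (hδ : ∀ u ∈ X, δ ≤ degreeIn G X u) (v : V) :
    2 * (δ * degreeIn G X v) ≤ #(G.interedges X X) := by
  classical
  set N : Finset V := {u ∈ X | G.Adj v u}
  have hNX : N ⊆ X := filter_subset _ _
  have hdisj : Disjoint (G.interedges N X) (G.interedges X N) := by
    rw [Finset.disjoint_left]
    rintro ⟨a, b⟩ hab hab'
    rw [mk_mem_interedges_iff] at hab hab'
    exact htri {v, a, b} (is3Clique_triple_iff.mpr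
      ⟨(mem_filter.mp hab.1).2, (mem_filter.mp hab'.2.1).2, hab.2.2⟩)
  have hle : δ * degreeIn G X v ≤ #(G.interedges N X) := by
    rw [card_interedges_eq_sum_degreeIn, mul_comm]
    exact card_nsmul_le_sum N _ δ fun u hu ↦ hδ u (hNX hu)
  calc 2 * (δ * degreeIn G X v)
      ≤ #(G.interedges N X) + #(G.interedges X N) := by
        rw [card_interedges_comm X N]; lia
    _ = #(G.interedges N X ∪ G.interedges X N) := (card_union_of_disjoint hdisj).symm
    _ ≤ #(G.interedges X X) := card_le_card <|
        union_subset (G.interedges_mono hNX subset_rfl) (G.interedges_mono subset_rfl hNX)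

end TriangleFree

section Cuts

variable {V : Type*} [Fintype V] [DecidableEq V] (G : SimpleGraph V) [DecidableRel G.Adj]

/-- The number of edges leaving the vertex set `X`, that is, the cardinality of `∇(X)`. The
ordered pairs counted have their first entry in `X`, so every edge is counted once. -/
def cutSize (X : Finset V) : ℕ := #(G.interedges X Xᶜ)

variable {G}

lemma cutSize_compl (X : Finset V) : cutSize G Xᶜ = cutSize G X := by
  rw [cutSize, cutSize, compl_compl, card_interedges_comm]

lemma ncard_edgeBoundary (X : Finset V) : (edgeBoundary G X).ncard = cutSize G X := by
  have himage : edgeBoundary G X =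
      (fun p : V × V ↦ s(p.1, p.2)) '' (G.interedges X Xᶜ : Set (V × V)) := by
    ext e
    simp only [edgeBoundary, Set.mem_image, Prod.exists, mem_coe, mk_mem_interedges_iff,
      mem_compl, Set.mem_compl_iff, Set.mem_ofPred_eq]
    constructor
    · rintro ⟨he, x, hx, y, hy, rfl⟩
      exact ⟨x, y, ⟨hx, hy, he⟩, rfl⟩
    · rintro ⟨x, y, ⟨hx, hy, he⟩, rfl⟩
      exact ⟨he, x, hx, y, hy, rfl⟩
  rw [himage, Set.InjOn.ncard_image, Set.ncard_coe_finset, cutSize]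
  rintro ⟨a, b⟩ hab ⟨c, d⟩ hcd h
  simp only [mem_coe, mk_mem_interedges_iff, mem_compl] at hab hcd
  rcases Sym2.eq_iff.mp h with ⟨rfl, rfl⟩ | ⟨rfl, rfl⟩
  · rfl
  · exact absurd hab.1 hcd.2.1

lemma cutSize_add_card_interedges_self {k : ℕ} (hreg : G.IsRegularOfDegree k) (X : Finset V) :
    cutSize G X + #(G.interedges X X) = k * #X := by
  simp only [cutSize, card_interedges_eq_sum_degreeIn, ← sum_add_distrib]
  simp only [add_comm, degreeIn_add_degreeIn_compl, hreg.degree_eq, sum_const, smul_eq_mul,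
    mul_comm]

lemma odd_card_of_odd_cutSize {k : ℕ} (hreg : G.IsRegularOfDegree k) {X : Finset V}
    (hX : Odd (cutSize G X)) : Odd #X := by
  have hodd := hX.add_even (even_card_interedges_self (G := G) X)
  rw [cutSize_add_card_interedges_self hreg] at hodd
  exact (Nat.odd_mul.mp hodd).2

lemma cutSize_map {W : Type*} [Fintype W] [DecidableEq W] {H : SimpleGraph W}
    [DecidableRel H.Adj] (φ : G ≃g H) (X : Finset V) :
    cutSize H (X.map φ.toEquiv.toEmbedding) = cutSize G X := by
  have hcompl : (X.map φ.toEquiv.toEmbedding)ᶜ = Xᶜ.map φ.toEquiv.toEmbedding := by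
    ext w
    simp
  rw [cutSize, hcompl, card_interedges_map, cutSize]

lemma cutSize_union_add_two_mul_card_interedges {X Y : Finset V} (h : Disjoint X Y) :
    cutSize G (X ∪ Y) + 2 * #(G.interedges X Y) = cutSize G X + cutSize G Y := by
  have hsplit {A B : Finset V} (hAB : Disjoint A B) :
      cutSize G A = #(G.interedges A (A ∪ B)ᶜ) + #(G.interedges A B) := by
    rw [cutSize, ← card_interedges_union_right, compl_union, union_comm, union_inter_distrib_left,
      union_compl, inter_univ, union_eq_right.mpr (subset_compl_iff_disjoint_left.mpr hAB)]
    exact disjoint_compl_left.mono_right subset_union_right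
  rw [hsplit h, hsplit h.symm, union_comm Y X, card_interedges_comm Y X, cutSize,
    card_interedges_union_left h]
  ring

lemma cutSize_add_two_mul_degreeIn {X : Finset V} {v : V} (hv : v ∈ X) :
    cutSize G X + 2 * degreeIn G X v = G.degree v + cutSize G (X.erase v) := by
  have hunion := cutSize_union_add_two_mul_card_interedges (G := G)
    (disjoint_singleton_left.mpr (notMem_erase v X))
  have hsingleton : cutSize G {v} = G.degree v := by
    rw [cutSize, card_interedges_eq_sum_degreeIn, sum_singleton, ← degreeIn_add_degreeIn_compl {v}]
    simp [degreeIn]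
  rwa [singleton_union, insert_erase hv, card_interedges_eq_sum_degreeIn, sum_singleton,
    degreeIn_erase_self, hsingleton] at hunion

lemma degree_le_two_mul_degreeIn {s : ℕ} {X : Finset V} {v : V}
    (hcut : ∀ Y : Finset V, s ≤ #Y → s ≤ #Yᶜ → cutSize G X ≤ cutSize G Y)
    (hX : s < #X) (hX' : s ≤ #Xᶜ) (hv : v ∈ X) : G.degree v ≤ 2 * degreeIn G X v := by
  have herase := card_erase_add_one hv
  have hcompl := card_le_card (compl_subset_compl.mpr (erase_subset v X))
  have hle := hcut (X.erase v) (by lia) (by lia)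
  have hsum := cutSize_add_two_mul_degreeIn (G := G) hv
  lia

lemma cutSize_inter_add_cutSize_union_le (X Y : Finset V) :
    cutSize G (X ∩ Y) + cutSize G (X ∪ Y) ≤ cutSize G X + cutSize G Y := by
  rw [cutSize, cutSize, cutSize, cutSize, ← card_union_add_card_inter,
    ← card_union_add_card_inter (G.interedges X Xᶜ)]
  refine Nat.add_le_add (card_le_card fun p ↦ ?_) (card_le_card fun p ↦ ?_)
  · simp only [mem_union, mem_inter, mem_interedges_iff, mem_compl]
    tauto
  · simp only [mem_union, mem_inter, mem_interedges_iff, mem_compl]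
    tauto

end Cuts

section RestrictedCuts

variable {V : Type*} {G : SimpleGraph V}

lemma edgeBoundary_compl (X : Set V) : edgeBoundary G Xᶜ = edgeBoundary G X := by
  ext e
  simp only [edgeBoundary, compl_compl]
  constructor <;> rintro ⟨he, x, hx, y, hy, rfl⟩ <;> exact ⟨he, y, hy, x, hx, Sym2.eq_swap⟩

lemma mem_of_reachable_deleteEdges_edgeBoundary {X : Set V} {u v : V}
    (h : (G.deleteEdges (edgeBoundary G X)).Reachable u v) (hu : u ∈ X) : v ∈ X := by
  obtain ⟨w⟩ := h
  induction w with
  | nil => exact hu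
  | cons hadj _ ih =>
    refine ih (by_contra fun hv ↦ ?_)
    rw [deleteEdges_adj] at hadj
    exact hadj.2 ⟨hadj.1, _, hu, _, hv, rfl⟩

lemma supp_connectedComponentMk_subset {X : Set V} {v : V} (hv : v ∈ X) :
    ((G.deleteEdges (edgeBoundary G X)).connectedComponentMk v).supp ⊆ X := fun _ hu ↦
  mem_of_reachable_deleteEdges_edgeBoundary (ConnectedComponent.exact hu).symm hv

lemma lambdaS_le_ncard {s : ℕ} {F : Set (Sym2 V)} (h : IsRestrictedEdgeCut G s F) :
    lambdaS G s ≤ F.ncard :=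
  Nat.sInf_le ⟨F, h, rfl⟩

lemma IsLambdaFragment.compl {s : ℕ} {X : Set V} (h : IsLambdaFragment G s X) :
    IsLambdaFragment G s Xᶜ := by
  rwa [IsLambdaFragment, edgeBoundary_compl]

lemma IsLambdaFragment.le_ncard [Finite V] {s : ℕ} {X : Set V} (h : IsLambdaFragment G s X)
    (hpos : 0 < lambdaS G s) : s ≤ X.ncard := by
  obtain ⟨e, -, v, hv, -⟩ := Set.nonempty_of_ncard_ne_zero (h.2 ▸ hpos.ne')
  exact (h.1.2.2 (connectedComponentMk _ v)).trans
    (Set.ncard_le_ncard (supp_connectedComponentMk_subset hv))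

lemma isRestrictedEdgeCut_edgeBoundary_of_forall_le_ncard {s : ℕ} {X : Set V} (hX : X.Nonempty)
    (hX' : Xᶜ.Nonempty)
    (h : ∀ c : (G.deleteEdges (edgeBoundary G X)).ConnectedComponent, s ≤ c.supp.ncard) :
    IsRestrictedEdgeCut G s (edgeBoundary G X) := by
  refine ⟨fun e he ↦ he.1, fun hconn ↦ ?_, h⟩
  obtain ⟨⟨a, ha⟩, b, hb⟩ := And.intro hX hX'
  exact hb (mem_of_reachable_deleteEdges_edgeBoundary (hconn.preconnected a b) ha)

lemma deleteEdges_edgeBoundary_adj {X : Set V} {u v : V} (hu : u ∈ X) (hv : v ∈ X)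
    (h : G.Adj u v) : (G.deleteEdges (edgeBoundary G X)).Adj u v := by
  refine deleteEdges_adj.mpr ⟨h, ?_⟩
  rintro ⟨-, x, hx, y, hy, hxy⟩
  rcases Sym2.eq_iff.mp hxy with ⟨rfl, rfl⟩ | ⟨rfl, rfl⟩
  · exact hy hv
  · exact hy hu

variable [DecidableEq V] [DecidableRel G.Adj]

lemma interedges_supp_sdiff_eq_empty {X C : Finset V} {v : V} (hv : v ∈ X)
    (hC : (C : Set V) = ((G.deleteEdges (edgeBoundary G X)).connectedComponentMk v).supp) :
    G.interedges C (X \ C) = ∅ := by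
  rw [Finset.eq_empty_iff_forall_notMem]
  rintro ⟨a, b⟩ hab
  obtain ⟨ha, hb, hadj⟩ := G.mk_mem_interedges_iff.mp hab
  obtain ⟨hbX, hbC⟩ := mem_sdiff.mp hb
  rw [← mem_coe, hC] at ha hbC
  have hab' := deleteEdges_edgeBoundary_adj (supp_connectedComponentMk_subset hv ha) hbX hadj
  exact hbC ((ConnectedComponent.sound hab'.symm.reachable).trans ha)

variable [Fintype V] {s : ℕ}

variable (G s) in
/-- Vertex sets with fewer than `s` vertices have large edge boundaries compared with `ℓ`: none
of them, if nonempty, has an empty boundary, and two of them with at least `s` vertices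
altogether have boundaries of total size more than `ℓ`. For `ℓ = λ_s(G)`, this prevents the
deletion of a small edge boundary from splitting off components with fewer than `s`
vertices. -/
structure ExpandsBelow (ℓ : ℕ) : Prop where
  cutSize_pos : ∀ C : Finset V, C.Nonempty → #C < s → 0 < cutSize G C
  lt_cutSize_add_cutSize : ∀ C D : Finset V, #C < s → #D < s → s ≤ #C + #D →
    ℓ < cutSize G C + cutSize G D

lemma ExpandsBelow.le_card_of_interedges_sdiff_eq_empty (h : ExpandsBelow G s (lambdaS G s))
    {X C : Finset V} (hX : s ≤ #X) (hX' : s ≤ #Xᶜ) (hcut : cutSize G X ≤ lambdaS G s)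
    (hlarge : ∀ D : Finset V, s ≤ #D → s ≤ #Dᶜ → cutSize G D < cutSize G X →
      lambdaS G s ≤ cutSize G D)
    (hC : C.Nonempty) (hCX : C ⊆ X) (hclosed : G.interedges C (X \ C) = ∅) : s ≤ #C := by
  by_contra! hlt
  have hsum := cutSize_union_add_two_mul_card_interedges (G := G) (disjoint_sdiff (s := C) (t := X))
  rw [union_sdiff_of_subset hCX, hclosed, card_empty] at hsum
  have hcard := card_sdiff_add_card_eq_card hCX
  have hcompl := card_le_card (compl_subset_compl.mpr (sdiff_subset (s := X) (t := C)))
  have hpos := h.cutSize_pos C hC hlt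
  rcases le_or_gt s #(X \ C) with hge | hlt'
  · have := hlarge _ hge (hX'.trans hcompl) (by lia)
    lia
  · have := h.lt_cutSize_add_cutSize C _ hlt hlt' (by lia)
    lia

lemma ExpandsBelow.isRestrictedEdgeCut_of_forall_lt (h : ExpandsBelow G s (lambdaS G s))
    (hs : 0 < s) {X : Finset V} (hX : s ≤ #X) (hX' : s ≤ #Xᶜ)
    (hcut : cutSize G X ≤ lambdaS G s)
    (hlarge : ∀ D : Finset V, s ≤ #D → s ≤ #Dᶜ → cutSize G D < cutSize G X →
      lambdaS G s ≤ cutSize G D) :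
    IsRestrictedEdgeCut G s (edgeBoundary G X) := by
  have hside {Y : Finset V} {v : V} (hv : v ∈ Y) (hY : s ≤ #Y) (hY' : s ≤ #Yᶜ)
      (hYX : cutSize G Y = cutSize G X) :
      s ≤ ((G.deleteEdges (edgeBoundary G Y)).connectedComponentMk v).supp.ncard := by
    obtain ⟨C, hC⟩ := (Set.toFinite
      ((G.deleteEdges (edgeBoundary G Y)).connectedComponentMk v).supp).exists_finset_coe
    rw [← hC, Set.ncard_coe_finset]
    refine h.le_card_of_interedges_sdiff_eq_empty hY hY' (hYX ▸ hcut) (hYX ▸ hlarge)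
      ⟨v, ?_⟩ ?_ (interedges_supp_sdiff_eq_empty hv hC)
    · rw [← mem_coe, hC]; rfl
    · rw [← coe_subset, hC]; exact supp_connectedComponentMk_subset hv
  refine isRestrictedEdgeCut_edgeBoundary_of_forall_le_ncard (card_pos.mp (hs.trans_le hX))
    (by exact_mod_cast card_pos.mp (hs.trans_le hX')) fun c ↦ ?_
  induction c using ConnectedComponent.ind with | h v => ?_
  by_cases hv : v ∈ X
  · exact hside hv hX hX' rfl
  · have := hside (mem_compl.mpr hv) hX' (by rwa [compl_compl]) (cutSize_compl X)
    rwa [coe_compl, edgeBoundary_compl] at this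

lemma ExpandsBelow.lambdaS_le_cutSize (h : ExpandsBelow G s (lambdaS G s))
    (hs : 0 < s) {X : Finset V} (hX : s ≤ #X) (hX' : s ≤ #Xᶜ) :
    lambdaS G s ≤ cutSize G X := by
  induction hn : cutSize G X using Nat.strong_induction_on generalizing X with
  | h n ih =>
    subst hn
    by_contra! hlt
    have hrestricted := h.isRestrictedEdgeCut_of_forall_lt hs hX hX' hlt.le
      fun D hD hD' hDX ↦ ih _ hDX hD hD' rfl
    have := lambdaS_le_ncard hrestricted
    rw [ncard_edgeBoundary] at this
    lia

lemma ExpandsBelow.isLambdaFragment_of_cutSize_eq (h : ExpandsBelow G s (lambdaS G s))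
    (hs : 0 < s) {X : Finset V} (hX : s ≤ #X) (hX' : s ≤ #Xᶜ) (hcut : cutSize G X = lambdaS G s) :
    IsLambdaFragment G s X :=
  ⟨h.isRestrictedEdgeCut_of_forall_lt hs hX hX' hcut.le
    fun _ hD hD' _ ↦ h.lambdaS_le_cutSize hs hD hD', by rw [ncard_edgeBoundary, hcut]⟩

end RestrictedCuts

section VertexTransitive

variable {V : Type*} [Fintype V] {G : SimpleGraph V}

/-- Double counting of the incidences between the vertices and the members of an invariant
family: by transitivity all vertices lie in equally many of the sets `f X`. -/
lemma VertexTransitive.card_dvd_sum_card (hvt : VertexTransitive G) {F : Finset (Finset V)}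
    {f : Finset V → Finset V}
    (hF : ∀ (φ : G ≃g G), ∀ X ∈ F, X.map φ.toEquiv.toEmbedding ∈ F)
    (hf : ∀ (φ : G ≃g G) (X : Finset V),
      f (X.map φ.toEquiv.toEmbedding) = (f X).map φ.toEquiv.toEmbedding) :
    Fintype.card V ∣ ∑ X ∈ F, #(f X) := by
  classical
  have hle (v w : V) : #{X ∈ F | v ∈ f X} ≤ #{X ∈ F | w ∈ f X} := by
    obtain ⟨φ, rfl⟩ := hvt v w
    refine card_le_card_of_injOn (map φ.toEquiv.toEmbedding) (fun X hX ↦ ?_)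
      (Finset.map_injective _).injOn
    obtain ⟨hXF, hvX⟩ := mem_filter.mp hX
    refine mem_filter.mpr ⟨hF φ X hXF, ?_⟩
    rw [hf]
    exact mem_map_of_mem _ hvX
  have hcount : ∑ X ∈ F, #(f X) = ∑ v, #{X ∈ F | v ∈ f X} := by
    have := sum_card_bipartiteAbove_eq_sum_card_bipartiteBelow (s := univ) (t := F)
      (fun (v : V) X ↦ v ∈ f X)
    simpa [bipartiteAbove, bipartiteBelow] using this.symm
  rw [hcount]
  rcases isEmpty_or_nonempty V with _ | ⟨⟨v⟩⟩
  · simp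
  · rw [sum_congr rfl fun w _ ↦ (hle w v).antisymm (hle v w), sum_const, smul_eq_mul, card_univ]
    exact dvd_mul_right _ _

end VertexTransitive

section CutFamily

variable {V : Type*} [Fintype V] [DecidableEq V] (G : SimpleGraph V) [DecidableRel G.Adj]

/-- The vertex sets with `m` vertices whose edge boundary has `ℓ` edges. -/
def cutFamily (m ℓ : ℕ) : Finset (Finset V) := {X | #X = m ∧ cutSize G X = ℓ}

variable {G} {m ℓ : ℕ} {X Y : Finset V}

lemma mem_cutFamily : X ∈ cutFamily G m ℓ ↔ #X = m ∧ cutSize G X = ℓ := by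
  simp [cutFamily]

lemma map_mem_cutFamily (φ : G ≃g G) (hX : X ∈ cutFamily G m ℓ) :
    X.map φ.toEquiv.toEmbedding ∈ cutFamily G m ℓ := by
  rwa [mem_cutFamily, card_map, cutSize_map, ← mem_cutFamily]

lemma card_dvd_card_cutFamily_mul (hvt : VertexTransitive G) :
    Fintype.card V ∣ #(cutFamily G m ℓ) * m := by
  have hdvd := hvt.card_dvd_sum_card (f := fun X ↦ X)
    (fun φ X ↦ map_mem_cutFamily (m := m) (ℓ := ℓ) φ) fun _ _ ↦ rfl
  rwa [sum_const_nat (m := m) fun X hX ↦ (mem_cutFamily.mp hX).1] at hdvd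

lemma card_dvd_card_cutFamily_mul_of_verticesOfDegreeIn (hvt : VertexTransitive G) {j k : ℕ}
    (hk : ∀ X ∈ cutFamily G m ℓ, #(verticesOfDegreeIn G X j) = k) :
    Fintype.card V ∣ #(cutFamily G m ℓ) * k := by
  have hdvd := hvt.card_dvd_sum_card (f := (verticesOfDegreeIn G · j))
    (fun φ X ↦ map_mem_cutFamily (m := m) (ℓ := ℓ) φ) fun φ X ↦ verticesOfDegreeIn_map φ X j
  rwa [sum_const_nat hk] at hdvd

lemma card_inter_le_of_mem_cutFamily {s : ℕ}
    (hcut : ∀ Z : Finset V, s ≤ #Z → s ≤ #Zᶜ → ℓ ≤ cutSize G Z)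
    (hmin : ∀ Z : Finset V, s < #Z → s ≤ #Zᶜ → cutSize G Z = ℓ → m ≤ #Z)
    (hcard : 2 * m ≤ Fintype.card V) (hX : X ∈ cutFamily G m ℓ) (hY : Y ∈ cutFamily G m ℓ)
    (hXY : X ≠ Y) : #(X ∩ Y) ≤ s ∧ (s ≤ #(X ∩ Y) → cutSize G (X ∩ Y) = ℓ) := by
  rw [mem_cutFamily] at hX hY
  have hlt : #(X ∩ Y) < m := by
    refine hX.1 ▸ card_lt_card (inter_subset_left.ssubset_of_ne fun h ↦ hXY ?_)
    exact eq_of_subset_of_card_le (inter_eq_left.mp h) (by lia)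
  have hsum := card_union_add_card_inter X Y
  have hcompl := card_add_card_compl (X ∪ Y)
  have hcompl' := card_add_card_compl (X ∩ Y)
  have hsub := cutSize_inter_add_cutSize_union_le (G := G) X Y
  have heq (hs : s ≤ #(X ∩ Y)) : cutSize G (X ∩ Y) = ℓ := by
    have hinter := hcut (X ∩ Y) hs (by lia)
    have hunion := hcut (X ∪ Y) (by lia) (by lia)
    lia
  refine ⟨?_, heq⟩
  by_contra! hs
  exact hlt.not_ge (hmin _ hs (by lia) (heq hs.le))

end CutFamily

section FiveRegular

variable {V : Type*} [Fintype V] [DecidableEq V] {G : SimpleGraph V} [DecidableRel G.Adj]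
  {X Y : Finset V}

lemma expandsBelow_thirteen (htri : G.CliqueFree 3) (hreg : G.IsRegularOfDegree 5) {s : ℕ}
    (hs : 4 ≤ s) (hs' : s ≤ 6) : ExpandsBelow G s 13 := by
  have hmantel (C : Finset V) : 10 * #C ≤ 2 * cutSize G C + #C ^ 2 := by
    have hsum := cutSize_add_card_interedges_self hreg C
    have hle := two_mul_card_interedges_self_le htri C
    lia
  refine ⟨fun C hC hlt ↦ ?_, fun C D hC hD hCD ↦ ?_⟩
  · have hC' := hmantel C
    have hpos := card_pos.mpr hC
    nlinarith
  · have hC' := hmantel C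
    have hD' := hmantel D
    generalize #C = c at *
    generalize #D = d at *
    have : c ≤ 5 := by lia
    have : d ≤ 5 := by lia
    interval_cases c <;> interval_cases d <;> lia

lemma three_le_degreeIn (hreg : G.IsRegularOfDegree 5)
    (hcut : ∀ Z : Finset V, 5 ≤ #Z → 5 ≤ #Zᶜ → 13 ≤ cutSize G Z) (hX : cutSize G X = 13)
    (hcard : 5 < #X) (hcard' : 5 ≤ #Xᶜ) {v : V} (hv : v ∈ X) : 3 ≤ degreeIn G X v := by
  have := degree_le_two_mul_degreeIn (hX ▸ hcut) hcard hcard' hv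
  rw [hreg.degree_eq] at this
  lia

lemma card_ne_seven (htri : G.CliqueFree 3) (hreg : G.IsRegularOfDegree 5)
    (hdeg : ∀ v ∈ X, 3 ≤ degreeIn G X v) (hX : cutSize G X = 13) : #X ≠ 7 := by
  intro hcard
  have hedges := cutSize_add_card_interedges_self hreg X
  have hle : ∀ v ∈ X, degreeIn G X v ≤ 3 := fun v _ ↦ by
    have := two_mul_mul_degreeIn_le_card_interedges_self htri hdeg v
    lia
  have hsum := sum_le_card_nsmul X _ 3 hle
  rw [← card_interedges_eq_sum_degreeIn, smul_eq_mul] at hsum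
  lia

lemma degreeIn_le_three (htri : G.CliqueFree 3) (hreg : G.IsRegularOfDegree 5)
    (hX : #X ≤ 5) (hcut : 5 ≤ #X → cutSize G X = 13) {v : V} (hv : v ∈ X) :
    degreeIn G X v ≤ 3 := by
  by_contra! hlt
  have hcard := degreeIn_lt_card (G := G) hv
  have hstar := card_interedges_self_add_two_le_of_dominating htri hv (by lia)
  have hedges := cutSize_add_card_interedges_self hreg X
  have := hcut (by lia)
  lia

lemma degreeIn_add_degreeIn_le_eight (htri : G.CliqueFree 3) (hreg : G.IsRegularOfDegree 5)
    (hXY : #(X ∩ Y) ≤ 5 ∧ (5 ≤ #(X ∩ Y) → cutSize G (X ∩ Y) = 13)) {v : V} (hv : v ∈ X ∩ Y) :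
    degreeIn G X v + degreeIn G Y v ≤ 8 := by
  have hsum := degreeIn_add_degreeIn_le (G := G) X Y v
  have hle := degreeIn_le_three htri hreg hXY.1 hXY.2 hv
  rw [hreg.degree_eq] at hsum
  lia

lemma degreeIn_le_four (hvt : VertexTransitive G) (htri : G.CliqueFree 3)
    (hreg : G.IsRegularOfDegree 5)
    (hinter : ∀ X ∈ cutFamily G 9 13, ∀ Y ∈ cutFamily G 9 13, X ≠ Y →
      #(X ∩ Y) ≤ 5 ∧ (5 ≤ #(X ∩ Y) → cutSize G (X ∩ Y) = 13))
    (hdeg : ∀ v ∈ X, 3 ≤ degreeIn G X v) (hX : X ∈ cutFamily G 9 13) {v : V} (hv : v ∈ X) :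
    degreeIn G X v ≤ 4 := by
  by_contra! hlt
  have hfive (u : V) : degreeIn G X u ≤ 5 := hreg.degree_eq u ▸ degreeIn_le_degree X u
  obtain ⟨y, hy, heven⟩ := exists_even_degreeIn_of_odd_card (G := G) (X := X)
    (by rw [(mem_cutFamily.mp hX).1]; decide)
  have hy4 : degreeIn G X y = 4 := by
    have := hdeg y hy
    have := hfive y
    obtain ⟨m, hm⟩ := heven
    lia
  obtain ⟨φ, rfl⟩ := hvt v y
  have hvY : degreeIn G (X.map φ.toEquiv.toEmbedding) (φ v) = degreeIn G X v := degreeIn_map φ X v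
  have hne : X ≠ X.map φ.toEquiv.toEmbedding := fun h ↦ by
    rw [← h] at hvY
    lia
  have := degreeIn_add_degreeIn_le_eight htri hreg (hinter _ hX _ (map_mem_cutFamily φ hX) hne)
    (mem_inter.mpr ⟨hy, mem_map_of_mem _ hv⟩)
  lia

lemma card_verticesOfDegreeIn_four (hreg : G.IsRegularOfDegree 5)
    (hdeg : ∀ v ∈ X, 3 ≤ degreeIn G X v) (hdeg' : ∀ v ∈ X, degreeIn G X v ≤ 4)
    (hX : X ∈ cutFamily G 9 13) : #(verticesOfDegreeIn G X 4) = 5 := by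
  have hedges := cutSize_add_card_interedges_self hreg X
  have hsum : #(G.interedges X X) = 3 * #X + #(verticesOfDegreeIn G X 4) := by
    have hvalue : ∀ v ∈ X, degreeIn G X v = 3 + if degreeIn G X v = 4 then 1 else 0 := by
      intro v hv
      have := hdeg v hv
      have := hdeg' v hv
      split_ifs <;> lia
    rw [card_interedges_eq_sum_degreeIn, sum_congr rfl hvalue, sum_add_distrib, sum_const,
      verticesOfDegreeIn, card_filter, smul_eq_mul, mul_comm]
  rw [mem_cutFamily] at hX
  lia

lemma eight_le_card_interedges_verticesOfDegreeIn_four (hreg : G.IsRegularOfDegree 5)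
    (hX : X ∈ cutFamily G 9 13) (hB : #(verticesOfDegreeIn G X 4) = 5) :
    8 ≤ #(G.interedges (verticesOfDegreeIn G X 4) (verticesOfDegreeIn G X 4)) := by
  set B := verticesOfDegreeIn G X 4
  have hBX : B ⊆ X := filter_subset _ _
  have hdisj : Disjoint B (X \ B) := disjoint_sdiff
  have hunion : B ∪ X \ B = X := union_sdiff_of_subset hBX
  have hedges := cutSize_add_card_interedges_self hreg X
  have hBsum : #(G.interedges B X) = 4 * #B := by
    have hvalue : ∀ v ∈ B, degreeIn G X v = 4 := fun v hv ↦ (mem_filter.mp hv).2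
    rw [card_interedges_eq_sum_degreeIn, sum_congr rfl hvalue, sum_const, smul_eq_mul, mul_comm]
  have hBsplit := card_interedges_union_right (G := G) B hdisj
  have hXsplit := card_interedges_union_left (G := G) hdisj X
  have hCB := card_le_card (G.interedges_mono (subset_refl (X \ B)) hBX)
  rw [card_interedges_comm] at hCB
  rw [hunion] at hBsplit hXsplit
  rw [mem_cutFamily] at hX
  lia

lemma disjoint_interedges_verticesOfDegreeIn_four (htri : G.CliqueFree 3)
    (hreg : G.IsRegularOfDegree 5) (hXY : #(X ∩ Y) ≤ 5) :
    Disjoint (G.interedges (verticesOfDegreeIn G X 4) (verticesOfDegreeIn G X 4))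
      (G.interedges (verticesOfDegreeIn G Y 4) (verticesOfDegreeIn G Y 4)) := by
  rw [Finset.disjoint_left]
  rintro ⟨u, v⟩ hX hY
  simp only [mk_mem_interedges_iff, verticesOfDegreeIn, mem_filter] at hX hY
  have hu := degreeIn_add_degreeIn_le (G := G) X Y u
  have hv := degreeIn_add_degreeIn_le (G := G) X Y v
  have huv := degreeIn_add_degreeIn_le_card htri (X ∩ Y) hX.2.2
  rw [hreg.degree_eq] at hu hv
  lia

lemma eight_mul_card_cutFamily_le (htri : G.CliqueFree 3) (hreg : G.IsRegularOfDegree 5)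
    (hinter : ∀ X ∈ cutFamily G 9 13, ∀ Y ∈ cutFamily G 9 13, X ≠ Y → #(X ∩ Y) ≤ 5)
    (hB : ∀ X ∈ cutFamily G 9 13, #(verticesOfDegreeIn G X 4) = 5) :
    8 * #(cutFamily G 9 13) ≤ 5 * Fintype.card V := by
  set E : Finset V → Finset (V × V) := fun X ↦
    G.interedges (verticesOfDegreeIn G X 4) (verticesOfDegreeIn G X 4)
  have hdisj : (cutFamily G 9 13 : Set (Finset V)).PairwiseDisjoint E := fun X hX Y hY hXY ↦
    disjoint_interedges_verticesOfDegreeIn_four htri hreg (hinter X hX Y hY hXY)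
  calc 8 * #(cutFamily G 9 13)
      ≤ ∑ X ∈ cutFamily G 9 13, #(E X) := by
        rw [mul_comm]
        exact card_nsmul_le_sum _ _ 8 fun X hX ↦
          eight_le_card_interedges_verticesOfDegreeIn_four hreg hX (hB X hX)
    _ = #((cutFamily G 9 13).biUnion E) := (card_biUnion hdisj).symm
    _ ≤ #(G.interedges univ univ) := card_le_card <| biUnion_subset.mpr fun X _ ↦
        G.interedges_mono (subset_univ _) (subset_univ _)
    _ = 5 * Fintype.card V := by
        rw [card_interedges_eq_sum_degreeIn]
        simp only [degreeIn_univ, hreg.degree_eq, sum_const, card_univ, smul_eq_mul, mul_comm]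

lemma cutFamily_nine_thirteen_eq_empty (hvt : VertexTransitive G) (htri : G.CliqueFree 3)
    (hreg : G.IsRegularOfDegree 5)
    (hcut : ∀ Z : Finset V, 5 ≤ #Z → 5 ≤ #Zᶜ → 13 ≤ cutSize G Z)
    (hmin : ∀ Z : Finset V, 5 < #Z → 5 ≤ #Zᶜ → cutSize G Z = 13 → 9 ≤ #Z)
    (hcard : 18 ≤ Fintype.card V) : cutFamily G 9 13 = ∅ := by
  have hinter : ∀ X ∈ cutFamily G 9 13, ∀ Y ∈ cutFamily G 9 13, X ≠ Y →
      #(X ∩ Y) ≤ 5 ∧ (5 ≤ #(X ∩ Y) → cutSize G (X ∩ Y) = 13) := fun X hX Y hY hXY ↦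
    card_inter_le_of_mem_cutFamily hcut hmin hcard hX hY hXY
  have hB : ∀ X ∈ cutFamily G 9 13, #(verticesOfDegreeIn G X 4) = 5 := by
    intro X hX
    obtain ⟨hX9, hX13⟩ := mem_cutFamily.mp hX
    have hcompl := card_add_card_compl X
    have hdeg : ∀ v ∈ X, 3 ≤ degreeIn G X v := fun v hv ↦
      three_le_degreeIn hreg hcut hX13 (by lia) (by lia) hv
    exact card_verticesOfDegreeIn_four hreg hdeg
      (fun v ↦ degreeIn_le_four hvt htri hreg hinter hdeg hX) hX
  have hdvd : Fintype.card V ∣ #(cutFamily G 9 13) := by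
    have h9 := card_dvd_card_cutFamily_mul (m := 9) (ℓ := 13) hvt
    have h5 := card_dvd_card_cutFamily_mul_of_verticesOfDegreeIn hvt hB
    simpa [mul_assoc, ← Nat.mul_sub] using Nat.dvd_sub (h5.mul_right 2) h9
  have hupper := eight_mul_card_cutFamily_le htri hreg
    (fun X hX Y hY hXY ↦ (hinter X hX Y hY hXY).1) hB
  by_contra hne
  have := Nat.le_of_dvd (card_pos.mpr (nonempty_iff_ne_empty.mpr hne)) hdvd
  lia

lemma card_ne_nine (hvt : VertexTransitive G) (htri : G.CliqueFree 3)
    (hreg : G.IsRegularOfDegree 5)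
    (hcut : ∀ Z : Finset V, 5 ≤ #Z → 5 ≤ #Zᶜ → 13 ≤ cutSize G Z)
    (hmin : ∀ Z : Finset V, 6 ≤ #Z → 6 ≤ #Zᶜ → cutSize G Z = 13 → #X ≤ #Z)
    (hle : #X ≤ #Xᶜ) (hX : cutSize G X = 13) : #X ≠ 9 := by
  intro hcard
  have hcompl := card_add_card_compl X
  have hnine (Z : Finset V) (hZ : 5 < #Z) (_ : 5 ≤ #Zᶜ) (h13 : cutSize G Z = 13) : 9 ≤ #Z := by
    have := card_add_card_compl Z
    have := hmin Z hZ
    lia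
  have hempty := cutFamily_nine_thirteen_eq_empty hvt htri hreg hcut hnine (by lia)
  exact notMem_empty X (hempty ▸ mem_cutFamily.mpr ⟨hcard, hX⟩)

end FiveRegular

theorem statement14_general {V : Type*} [Fintype V] (G : SimpleGraph V) [DecidableRel G.Adj]
    (hvt : VertexTransitive G) (htri : G.CliqueFree 3) (hreg : G.IsRegularOfDegree 5)
    (h5 : lambdaS G 5 = 13) (h6 : lambdaS G 6 = 13) (S : Set V) (hS : IsLambdaAtom G 6 S) :
    11 ≤ S.ncard := by
  classical
  obtain ⟨X, rfl⟩ := S.toFinite.exists_finset_coe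
  obtain ⟨hfrag, hatom⟩ := hS
  simp only [Set.ncard_coe_finset] at hatom ⊢
  have hexp {s : ℕ} (hs : 4 ≤ s) (hs' : s ≤ 6) := expandsBelow_thirteen htri hreg hs hs'
  have hcut (Z : Finset V) (hZ : 5 ≤ #Z) (hZ' : 5 ≤ #Zᶜ) : 13 ≤ cutSize G Z :=
    h5 ▸ (h5.symm ▸ hexp (by lia) (by lia)).lambdaS_le_cutSize (by lia) hZ hZ'
  have hmin (Z : Finset V) (hZ : 6 ≤ #Z) (hZ' : 6 ≤ #Zᶜ) (h13 : cutSize G Z = 13) : #X ≤ #Z := by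
    simpa using hatom Z ((h6.symm ▸ hexp (by lia) le_rfl).isLambdaFragment_of_cutSize_eq
      (by lia) hZ hZ' (h13.trans h6.symm))
  have hX13 : cutSize G X = 13 := by rw [← ncard_edgeBoundary, hfrag.2, h6]
  have hX6 : 6 ≤ #X := by simpa using hfrag.le_ncard (by lia)
  have hX6' : 6 ≤ #Xᶜ := by simpa [← coe_compl] using hfrag.compl.le_ncard (by lia)
  have hle := hmin Xᶜ hX6' (by rwa [compl_compl]) (by rwa [cutSize_compl])
  have hodd : Odd #X := odd_card_of_odd_cutSize hreg (by rw [hX13]; decide)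
  have hne7 := card_ne_seven htri hreg
    (fun v ↦ three_le_degreeIn hreg hcut hX13 hX6 (by lia)) hX13
  have hne9 := card_ne_nine hvt htri hreg hcut hmin hle hX13
  obtain ⟨m, hm⟩ := hodd
  lia

/-- (Lemma 3.6) `G` connected vertex-transitive non-bipartite
triangle-free of degree 5 and even order, not 4-factor-critical, with
`λ₅(G) = λ₆(G) = 13`. Then every `λ₆`-atom `S` of `G` satisfies `|S| ≥ 11`. -/
theorem statement14 {V : Type*} [Fintype V] [DecidableEq V]
    (G : SimpleGraph V) [DecidableRel G.Adj]
    (hconn : G.Connected) (hvt : VertexTransitive G) (hnb : ¬ G.Colorable 2)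
    (htri : G.CliqueFree 3) (hreg : G.IsRegularOfDegree 5)
    (heven : Even (Fintype.card V)) (hnfc : ¬ PFactorCritical G 4)
    (h5 : lambdaS G 5 = 13) (h6 : lambdaS G 6 = 13)
    (S : Set V) (hS : IsLambdaAtom G 6 S) :
    11 ≤ S.ncard :=
  statement14_general G hvt htri hreg h5 h6 S hS
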